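/- Every finitely generated FI-module M over ℂ admits a finite resolution by finitely generated injectives: there is an exact sequence 0 → M → I^0 → I^1 → ⋯ → I^n → 0 of FI-modules (exactness meaning exactness of the sequence of vector spaces at every finite set) in which each I^j is finitely generated and is injective in the category of finitely generated FI-modules (i.e. for every morphism i : X → Y of finitely generated FI-modules with each i_S injective and every morphism f : X → I^j there exists g : Y → I^j with g ∘ i = f). -/

import Mathlib

open CategoryTheory

structure FIObj where
  α : Type
  fin : Fintype α

instance (S : FIObj) : Fintype S.α := S.fin

def FIObj.of (α : Type) [Fintype α] : FIObj := ⟨α, inferInstance⟩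

instance : Category FIObj where
  Hom S T := {f : S.α → T.α // Function.Injective f}
  id S := ⟨id, Function.injective_id⟩
  comp f g := ⟨g.1 ∘ f.1, g.2.comp f.2⟩

/-- FI-modules over ℂ: functors from FI to ℂ-vector spaces. -/
abbrev FIMod := FIObj ⥤ ModuleCat.{0} ℂ

/-- A sub-FI-module. -/
structure FISub (M : FIMod) where
  carrier : ∀ S : FIObj, Submodule ℂ (M.obj S)
  map_mem : ∀ {S T : FIObj} (f : S ⟶ T) (x : M.obj S), x ∈ carrier S → M.map f x ∈ carrier T

/-- A finitely generated FI-module. -/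
def FIMod.FG (M : FIMod) : Prop :=
  ∃ (k : ℕ) (S : Fin k → FIObj) (m : ∀ i, M.obj (S i)),
    ∀ N : FISub M, (∀ i, m i ∈ N.carrier (S i)) → ∀ T, N.carrier T = ⊤
/-- Injectivity in the category of finitely generated FI-modules. -/
def InjectiveInFG (I : FIMod) : Prop :=
  ∀ (X Y : FIMod), FIMod.FG X → FIMod.FG Y →
    ∀ (i : X ⟶ Y), (∀ S : FIObj, Function.Injective (i.app S)) →
      ∀ f : X ⟶ I, ∃ g : Y ⟶ I, i ≫ g = f

/-!
For a finite set `K`, the coprincipal module `Q_K : S ↦ ℂ^Hom(S, K)` represents `M ↦ M(K)^*` and is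
therefore injective. The principal module `P_K : S ↦ ℂ[Hom(K, S)]` is injective as well: by Möbius
inversion it is a direct summand of `S ↦ ℂ^PInj(S, K)`, where `PInj` denotes partial injections.
A morphism from `M` to the latter is obtained by averaging elements of `M(K ⊔ Fin m)` over the
permutations of `Fin m` and applying a linear form on sequences modulo finitely many terms, and such
forms extend along monomorphisms.

Let `M` be finitely generated. The dimensions of the invariants of `M(K ⊔ Fin m)` are eventually
constant in `m`, from which it follows that a submodule of `M` killed by every morphism to a
principal module vanishes on all large sets. Hence finitely many `P_K` and `Q_K` detect the
submodules of `M`. Their endomorphism rings are semisimple, so `M` has a universal morphism to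
summands of powers of each of them. The sum of these morphisms is mono, and its cokernel has no
nonzero morphism to the `P_K` with `K` of maximal size or, once no `P_K` is left, to the `Q_K` with
`K` of maximal size.
-/

open Limits

/-! ### Left approximations -/

section LeftApproximation

variable {C : Type*} [Category C] [Preadditive C]

/-- Precomposition with `f`, as a map of modules over the endomorphism ring of the target. -/
def precompEndLinear {X Y : C} (f : X ⟶ Y) (Z : C) : (Y ⟶ Z) →ₗ[End Z] (X ⟶ Z) where
  toFun φ := f ≫ φ
  map_add' := Preadditive.comp_add _ _ _ f
  map_smul' r φ := (Category.assoc f φ r).symm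

variable [HasFiniteBiproducts C]

/-- A morphism from `M` to a direct summand of a finite power of `Q`, along which every morphism
`M ⟶ Q` extends uniquely. -/
structure LeftApproximation (M Q : C) where
  obj : C
  power : ℕ
  retract : Retract obj (⨁ fun _ : Fin power => Q)
  hom : M ⟶ obj
  bijective : Function.Bijective fun φ : obj ⟶ Q => hom ≫ φ

variable {M Q : C}

theorem exists_lift_precomp_surjective [Module.Finite (End Q) (M ⟶ Q)] :
    ∃ (n : ℕ) (θ : M ⟶ ⨁ fun _ : Fin n => Q), Function.Surjective (precompEndLinear θ Q) := by
  obtain ⟨n, v, hv⟩ := Module.Finite.exists_fin (R := End Q) (M := M ⟶ Q)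
  refine ⟨n, biproduct.lift v, LinearMap.range_eq_top.mp (top_le_iff.mp ?_)⟩
  rw [← hv, Submodule.span_le]
  rintro _ ⟨j, rfl⟩
  exact ⟨biproduct.π _ j, biproduct.lift_π v j⟩

theorem lift_map_π_comp {n : ℕ}
    (p : ((⨁ fun _ : Fin n => Q) ⟶ Q) →ₗ[End Q] ((⨁ fun _ : Fin n => Q) ⟶ Q))
    (φ : (⨁ fun _ : Fin n => Q) ⟶ Q) :
    biproduct.lift (fun j => p (biproduct.π _ j)) ≫ φ = p φ := by
  let Qs := fun _ : Fin n => Q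
  let coeff (j : Fin n) : End Q := biproduct.ι Qs j ≫ φ
  have φ_eq : φ = ∑ j, coeff j • biproduct.π Qs j := by
    rw [← Category.id_comp φ, ← biproduct.total, Preadditive.sum_comp]
    exact Finset.sum_congr rfl fun j _ => Category.assoc _ _ _
  rw [φ_eq, map_sum, Preadditive.comp_sum]
  refine Finset.sum_congr rfl fun j _ => ?_
  rw [map_smul]
  exact biproduct.lift_π_assoc (fun j => p (biproduct.π Qs j)) j (biproduct.ι Qs j ≫ φ)

/-- The projective module `M ⟶ Q` is the image of an `End Q`-linear projector of `Qⁿ ⟶ Q`, and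
such a projector is precomposition with an idempotent of `Qⁿ`. -/
theorem nonempty_leftApproximation [IsIdempotentComplete C] [Module.Finite (End Q) (M ⟶ Q)]
    [Module.Projective (End Q) (M ⟶ Q)] : Nonempty (LeftApproximation M Q) := by
  obtain ⟨n, θ, hθ⟩ := exists_lift_precomp_surjective (M := M) (Q := Q)
  obtain ⟨σ, hσ⟩ := Module.projective_lifting_property (precompEndLinear θ Q) LinearMap.id hθ
  replace hσ (φ : M ⟶ Q) : θ ≫ σ φ = φ := LinearMap.congr_fun hσ φ
  set e := biproduct.lift fun j => σ (θ ≫ biproduct.π (fun _ : Fin n => Q) j)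
  have e_comp (φ : (⨁ fun _ : Fin n => Q) ⟶ Q) : e ≫ φ = σ (θ ≫ φ) :=
    lift_map_π_comp (σ ∘ₗ precompEndLinear θ Q) φ
  have θ_e : θ ≫ e = θ := biproduct.hom_ext _ _ fun j => by
    rw [Category.assoc, e_comp, hσ]
  have e_e : e ≫ e = e := biproduct.hom_ext _ _ fun j => by
    rw [Category.assoc, e_comp, e_comp, hσ]
  obtain ⟨I, s, r, s_r, r_s⟩ := IsIdempotentComplete.idempotents_split _ e e_e
  refine ⟨⟨I, n, ⟨s, r, s_r⟩, θ ≫ r, fun φ ψ h => ?_, fun φ => ⟨s ≫ σ φ, ?_⟩⟩⟩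
  · have h' : e ≫ r ≫ φ = e ≫ r ≫ ψ := by
      simp only [Category.assoc] at h
      rw [e_comp, e_comp, h]
    simpa only [← r_s, Category.assoc, reassoc_of% s_r, s_r, Category.comp_id, Category.id_comp]
      using s ≫= h'
  · simp only [Category.assoc, reassoc_of% r_s, reassoc_of% θ_e, hσ]

namespace LeftApproximation

theorem comp_eq_zero (a : LeftApproximation M Q) {R : C} (h : ∀ φ : Q ⟶ R, φ = 0)
    (φ : a.obj ⟶ R) : φ = 0 := by
  have hr : a.retract.r ≫ φ = 0 := biproduct.hom_ext' _ _ fun j => by rw [h (_ ≫ _ ≫ φ), h (_ ≫ 0)]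
  rw [← Category.id_comp φ, ← a.retract.retract, Category.assoc, hr, comp_zero]

variable {ι : Type} [Finite ι] {J : ι → C} (a : ∀ i, LeftApproximation M (J i))

/-- The morphism to the direct sum of a finite family of left approximations. -/
noncomputable abbrev sumHom : M ⟶ ⨁ fun i => (a i).obj := biproduct.lift fun i => (a i).hom

theorem mono_sumHom [HasKernels C]
    (h : ∀ (A : C) (j : A ⟶ M) [Mono j], (∀ (i : ι) (φ : M ⟶ J i), j ≫ φ = 0) → j = 0) :
    Mono (sumHom a) := by
  refine Preadditive.mono_of_kernel_zero (h _ (kernel.ι (sumHom a)) fun i φ => ?_)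
  obtain ⟨ψ, hψ⟩ := (a i).bijective.2 φ
  have factor : φ = sumHom a ≫ biproduct.π _ i ≫ ψ := by rw [biproduct.lift_π_assoc]; exact hψ.symm
  rw [factor, kernel.condition_assoc, zero_comp]

theorem cokernel_comp_eq_zero [HasCokernel (sumHom a)] {R : C} (h : ∀ i (φ : J i ⟶ R), φ = 0)
    (φ : cokernel (sumHom a) ⟶ R) : φ = 0 := by
  rw [← cancel_epi (cokernel.π (sumHom a)), comp_zero]
  refine biproduct.hom_ext' _ _ fun i => ?_
  rw [(a i).comp_eq_zero (h i) (_ ≫ _ ≫ φ), comp_zero]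

theorem cokernel_comp_eq_zero_of_ne [HasCokernel (sumHom a)] (k : ι)
    (h : ∀ i ≠ k, ∀ φ : J i ⟶ J k, φ = 0) (φ : cokernel (sumHom a) ⟶ J k) : φ = 0 := by
  classical
  rw [← cancel_epi (cokernel.π (sumHom a)), comp_zero]
  have factor : cokernel.π (sumHom a) ≫ φ
      = biproduct.π _ k ≫ biproduct.ι _ k ≫ cokernel.π (sumHom a) ≫ φ := by
    refine biproduct.hom_ext' _ _ fun i => ?_
    rcases eq_or_ne i k with rfl | hik
    · rw [biproduct.ι_π_self_assoc]
    · rw [(a i).comp_eq_zero (h i hik) (_ ≫ _ ≫ φ), biproduct.ι_π_ne_assoc _ hik, zero_comp]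
  have hk : biproduct.ι _ k ≫ cokernel.π (sumHom a) ≫ φ = 0 := by
    refine (a k).bijective.1 ?_
    dsimp only
    rw [comp_zero, ← biproduct.lift_π (fun i => (a i).hom) k, Category.assoc, ← factor,
      cokernel.condition_assoc, zero_comp]
  rw [factor, hk, comp_zero]

end LeftApproximation

end LeftApproximation

/-! ### Finitely generated FI-modules -/

theorem isSemisimpleRing_of_span_range_eq_top {k G A : Type*} [Field k] [Group G] [Finite G]
    [NeZero (Nat.card G : k)] [Ring A] [Algebra k A] (ρ : G →* A)
    (h : Submodule.span k (Set.range ρ) = ⊤) : IsSemisimpleRing A := by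
  have range_eq : LinearMap.range (MonoidAlgebra.lift k A G ρ).toLinearMap = ⊤ := by
    rw [← top_le_iff, ← h, Submodule.span_le]
    rintro _ ⟨g, rfl⟩
    exact ⟨MonoidAlgebra.of k G g, MonoidAlgebra.lift_of ρ g⟩
  exact (MonoidAlgebra.lift k A G ρ).toRingHom.isSemisimpleRing_of_surjective
    (LinearMap.range_eq_top.mp range_eq)

instance {k C : Type*} [CommSemiring k] [Category C] [Preadditive C] [Linear k C] (X Y : C) :
    IsScalarTower k (End Y) (X ⟶ Y) where
  smul_assoc c r f := Linear.comp_smul _ _ _ f c r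

namespace FIObj

instance {S T : FIObj} : Finite (S ⟶ T) := inferInstanceAs (Finite (Subtype _))

/-- The set with `n` elements. -/
abbrev ofFin (n : ℕ) : FIObj := FIObj.of (Fin n)

theorem card_ofFin (n : ℕ) : Fintype.card (ofFin n).α = n := Fintype.card_fin n

variable {S T : FIObj}

@[ext]
theorem hom_ext {f g : S ⟶ T} (h : ∀ x, f.1 x = g.1 x) : f = g := Subtype.ext (funext h)

/-- A bijection, as an isomorphism of `FI`. -/
def isoOfEquiv (e : S.α ≃ T.α) : S ≅ T where
  hom := ⟨e, e.injective⟩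
  inv := ⟨e.symm, e.symm.injective⟩
  hom_inv_id := hom_ext e.symm_apply_apply
  inv_hom_id := hom_ext e.apply_symm_apply

theorem card_le_of_hom (f : S ⟶ T) : Fintype.card S.α ≤ Fintype.card T.α :=
  Fintype.card_le_of_injective f.1 f.2

theorem isIso_of_card_le (f : S ⟶ T) (h : Fintype.card T.α ≤ Fintype.card S.α) : IsIso f := by
  have bij : Function.Bijective f.1 :=
    (Fintype.bijective_iff_injective_and_card f.1).2 ⟨f.2, (card_le_of_hom f).antisymm h⟩
  exact (isoOfEquiv (Equiv.ofBijective f.1 bij)).isIso_hom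

theorem nonempty_ofFin_iso (S : FIObj) : Nonempty (ofFin (Fintype.card S.α) ≅ S) :=
  ⟨isoOfEquiv (Fintype.equivFin S.α).symm⟩

theorem nonempty_hom_of_card_le (h : Fintype.card S.α ≤ Fintype.card T.α) : Nonempty (S ⟶ T) :=
  (Function.Embedding.nonempty_of_card_le h).map fun f : S.α ↪ T.α => ⟨f, f.injective⟩

theorem comp_right_injective (K : FIObj) (i : S ⟶ T) :
    Function.Injective fun g : K ⟶ S => g ≫ i := fun _ _ h =>
  hom_ext fun x => i.2 (congrFun (congrArg Subtype.val h) x)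

theorem isSemisimpleRing_end {F : FIObjᵒᵖ ⥤ FIMod} {K : FIObj}
    (h : ⊤ ≤ Submodule.span ℂ (Set.range fun f : K ⟶ K => F.map f.op)) :
    IsSemisimpleRing (End (F.obj (.op K))) := by
  have : Finite (Aut (Opposite.op K)) :=
    .of_injective (fun g => g.hom.unop) fun g g' h => Iso.ext (Quiver.Hom.unop_inj h)
  refine isSemisimpleRing_of_span_range_eq_top (k := ℂ)
    ((F.mapEnd _).comp (Aut.toEnd (Opposite.op K)))
    (top_le_iff.mp (h.trans (Submodule.span_mono ?_)))
  rintro _ ⟨f, rfl⟩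
  have := isIso_of_card_le f le_rfl
  exact ⟨asIso f.op, rfl⟩

end FIObj

namespace FIMod

instance : HasFiniteBiproducts FIMod := .of_hasFiniteProducts

variable {M N : FIMod}

theorem mono_iff (f : M ⟶ N) : Mono f ↔ ∀ S, Function.Injective (f.app S) := by
  simp only [NatTrans.mono_iff_mono_app, ModuleCat.mono_iff_injective]

theorem epi_iff (f : M ⟶ N) : Epi f ↔ ∀ S, Function.Surjective (f.app S) := by
  simp only [NatTrans.epi_iff_epi_app, ModuleCat.epi_iff_surjective]

theorem injectiveInFG (I : FIMod) [Injective I] : InjectiveInFG I := fun _ _ _ _ i hi f =>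
  have := (mono_iff i).2 hi
  ⟨Injective.factorThru f i, Injective.comp_factorThru f i⟩

theorem map_bijective_of_isIso (M : FIMod) {S T : FIObj} (f : S ⟶ T) [IsIso f] :
    Function.Bijective (M.map f) :=
  ConcreteCategory.bijective_of_isIso (M.map f)

end FIMod

namespace FISub

variable {M N : FIMod}

theorem eq_top_of_iso (N : FISub M) {S T : FIObj} (e : S ≅ T)
    (h : N.carrier S = ⊤) : N.carrier T = ⊤ := by
  refine eq_top_iff.2 fun x _ => ?_
  obtain ⟨y, rfl⟩ := (M.map_bijective_of_isIso e.hom).2 x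
  exact N.map_mem _ _ (h ▸ Submodule.mem_top)

/-- The preimage of a sub-FI-module under a morphism. -/
def comap (f : M ⟶ N) (N' : FISub N) : FISub M where
  carrier S := (N'.carrier S).comap (f.app S).hom
  map_mem g x hx := by
    have := N'.map_mem g _ hx
    rwa [← NatTrans.naturality_apply] at this

theorem comap_carrier_eq_top (f : M ⟶ N) {N' : FISub N} {S : FIObj} (h : N'.carrier S = ⊤) :
    (N'.comap f).carrier S = ⊤ :=
  (congrArg (Submodule.comap (f.app S).hom) h).trans (Submodule.comap_top _)

/-- The sub-FI-module generated by the elements `m i`. -/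
def span {ι : Type*} {S : ι → FIObj} (m : ∀ i, M.obj (S i)) : FISub M where
  carrier T := Submodule.span ℂ (Set.range fun p : Σ i, (S i ⟶ T) => M.map p.2 (m p.1))
  map_mem f x hx := by
    refine (Submodule.map_span_le (M.map f).hom _ _).2 ?_ (Submodule.mem_map_of_mem hx)
    rintro _ ⟨⟨i, g⟩, rfl⟩
    exact Submodule.subset_span ⟨⟨i, g ≫ f⟩, M.map_comp_apply g f _⟩

theorem mem_span {ι : Type*} {S : ι → FIObj} (m : ∀ i, M.obj (S i)) (i : ι) :
    m i ∈ (span m).carrier (S i) :=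
  Submodule.subset_span ⟨⟨i, 𝟙 _⟩, M.map_id_apply _ _⟩

end FISub

namespace FIMod

open FIObj (ofFin)

variable {M N : FIMod}

/-- `M` is pointwise finite-dimensional and generated by its values on sets with fewer than `D`
elements. -/
structure FGBelow (M : FIMod) (D : ℕ) : Prop where
  finite (S : FIObj) : Module.Finite ℂ (M.obj S)
  eq_top (N : FISub M) : (∀ d < D, N.carrier (ofFin d) = ⊤) → ∀ T, N.carrier T = ⊤

theorem FG.exists_fgBelow (hM : M.FG) : ∃ D, M.FGBelow D := by
  obtain ⟨k, S, m, hm⟩ := hM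
  refine ⟨Finset.univ.sup (fun i => Fintype.card (S i).α) + 1, fun T => ?_,
    fun N hN => hm N fun i => ?_⟩
  · rw [Module.finite_def, ← hm (.span m) (FISub.mem_span m) T]
    exact Submodule.fg_span (Set.finite_range _)
  · have hi := hN _ (Nat.lt_succ_of_le (Finset.le_sup (f := fun i => Fintype.card (S i).α)
      (Finset.mem_univ i)))
    rw [N.eq_top_of_iso (S i).nonempty_ofFin_iso.some hi]
    exact Submodule.mem_top

namespace FGBelow

variable {D : ℕ}

theorem fg (hM : M.FGBelow D) : M.FG := by
  have := hM.finite
  choose n v hv using fun d : Fin D => Module.Finite.exists_fin (R := ℂ) (M := M.obj (ofFin d))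
  let e := (Fintype.equivFin (Σ d, Fin (n d))).symm
  refine ⟨_, fun i => ofFin (e i).1, fun i => v _ (e i).2, fun N hN => hM.eq_top N fun d hd => ?_⟩
  have mem_carrier (p : Σ d, Fin (n d)) : v p.1 p.2 ∈ N.carrier (ofFin p.1) := by
    obtain ⟨i, rfl⟩ := e.surjective p
    exact hN i
  rw [← top_le_iff, ← hv ⟨d, hd⟩, Submodule.span_le]
  rintro _ ⟨j, rfl⟩
  exact mem_carrier ⟨⟨d, hd⟩, j⟩

theorem mono {D' : ℕ} (hM : M.FGBelow D) (h : D ≤ D') : M.FGBelow D' :=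
  ⟨hM.finite, fun N hN => hM.eq_top N fun d hd => hN d (hd.trans_le h)⟩

theorem of_epi (hM : M.FGBelow D) (p : M ⟶ N) [Epi p] : N.FGBelow D := by
  have hp := (epi_iff p).1 ‹_›
  have := hM.finite
  refine ⟨fun S => .of_surjective (p.app S).hom (hp S), fun N' hN' T => ?_⟩
  have comap_eq_top : (N'.comap p).carrier T = ⊤ :=
    hM.eq_top _ (fun d hd => FISub.comap_carrier_eq_top p (hN' d hd)) T
  refine eq_top_iff.2 fun x _ => ?_
  obtain ⟨y, rfl⟩ := hp T x
  exact (comap_eq_top ▸ Submodule.mem_top : y ∈ (N'.comap p).carrier T)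

theorem biproduct {ι : Type} [Finite ι] {M : ι → FIMod} (hM : ∀ i, (M i).FGBelow D) :
    (⨁ M).FGBelow D := by
  classical
  have := Fintype.ofFinite ι
  have := fun i => (hM i).finite
  have total (T : FIObj) (x : (⨁ M).obj T) :
      ∑ i, (biproduct.ι M i).app T ((biproduct.π M i).app T x) = x := by
    have app_total := congrArg (fun f => (f.app T).hom x) (biproduct.total (f := M))
    simp only [NatTrans.app_sum, ModuleCat.hom_sum, LinearMap.sum_apply] at app_total
    exact app_total
  refine ⟨fun T => ?_, fun N hN T => ?_⟩
  · let sum : (∀ i, (M i).obj T) →ₗ[ℂ] (⨁ M).obj T :=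
      ∑ i, ((biproduct.ι M i).app T).hom ∘ₗ LinearMap.proj i
    refine .of_surjective sum fun x => ⟨fun i => (biproduct.π M i).app T x, ?_⟩
    rw [LinearMap.sum_apply]
    exact total T x
  · refine eq_top_iff.2 fun x _ => total T x ▸ Submodule.sum_mem _ fun i _ => ?_
    have comap_eq_top : (N.comap (biproduct.ι M i)).carrier T = ⊤ :=
      (hM i).eq_top _ (fun d hd => FISub.comap_carrier_eq_top _ (hN d hd)) T
    exact (comap_eq_top ▸ Submodule.mem_top : _ ∈ (N.comap (biproduct.ι M i)).carrier T)

theorem linearMap_ext (hM : M.FGBelow D) {T : FIObj} {V : Type*} [AddCommGroup V] [Module ℂ V]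
    {l l' : M.obj T →ₗ[ℂ] V}
    (h : ∀ d < D, ∀ (g : ofFin d ⟶ T) (x : M.obj (ofFin d)), l (M.map g x) = l' (M.map g x)) :
    l = l' := by
  let gen (p : Σ d : Fin D, M.obj (ofFin d)) : M.obj (ofFin p.1) := p.2
  have span_eq_top := hM.eq_top (.span gen)
    (fun d hd => eq_top_iff.2 fun x _ => FISub.mem_span gen ⟨⟨d, hd⟩, x⟩) T
  refine LinearMap.ext_on span_eq_top ?_
  rintro _ ⟨⟨⟨d, x⟩, g⟩, rfl⟩
  exact h d d.2 g x

theorem hom_ext (hM : M.FGBelow D) {f g : M ⟶ N} (h : ∀ d < D, f.app (ofFin d) = g.app (ofFin d)) :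
    f = g := by
  ext T : 2
  refine ModuleCat.hom_ext (hM.linearMap_ext fun d hd i x => ?_)
  rw [NatTrans.naturality_apply, NatTrans.naturality_apply, h d hd]

theorem finite_hom (hM : M.FGBelow D) (hN : ∀ S, Module.Finite ℂ (N.obj S)) :
    Module.Finite ℂ (M ⟶ N) := by
  have := hM.finite
  let restrict : (M ⟶ N) →ₗ[ℂ] ∀ d : Fin D, M.obj (ofFin d) →ₗ[ℂ] N.obj (ofFin d) :=
    { toFun f d := (f.app (ofFin d)).hom
      map_add' _ _ := rfl
      map_smul' _ _ := rfl }
  refine .of_injective restrict fun f g h => hM.hom_ext fun d hd => ?_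
  exact ModuleCat.hom_ext (congrFun h ⟨d, hd⟩)

theorem finite_end_hom (hM : M.FGBelow D) (hN : ∀ S, Module.Finite ℂ (N.obj S)) :
    Module.Finite (End N) (M ⟶ N) :=
  have := hM.finite_hom hN
  .of_restrictScalars_finite ℂ _ _

end FGBelow

/-- `M` is zero on all sets with at least `n` elements. -/
def VanishesFrom (M : FIMod) (n : ℕ) : Prop :=
  ∀ S : FIObj, n ≤ Fintype.card S.α → Subsingleton (M.obj S)

theorem VanishesFrom.fgBelow {n : ℕ} (h : M.VanishesFrom n)
    (hfin : ∀ S, Module.Finite ℂ (M.obj S)) : M.FGBelow n := by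
  refine ⟨hfin, fun N hN S => ?_⟩
  rcases lt_or_ge (Fintype.card S.α) n with hS | hS
  · exact N.eq_top_of_iso S.nonempty_ofFin_iso.some (hN _ hS)
  · have := h S hS
    exact Subsingleton.elim _ _

end FIMod

/-! ### Finite injective resolutions -/

namespace FIMod

variable {M : FIMod}

/-- Exactness of `L ⟶ M ⟶ N` at every finite set. -/
def PointwiseExact {L M N : FIMod} (f : L ⟶ M) (g : M ⟶ N) : Prop :=
  ∀ S, LinearMap.range (f.app S).hom = LinearMap.ker (g.app S).hom

/-- `M` has a finite resolution by finitely generated FI-modules that are injective among all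
FI-modules. -/
def HasFiniteInjectiveResolution (M : FIMod) : Prop :=
  ∃ (n : ℕ) (I : ℕ → FIMod) (ι : M ⟶ I 0) (d : ∀ j, I j ⟶ I (j + 1)),
    (∀ j, (I j).FG) ∧ (∀ j, Injective (I j)) ∧ (∀ j, n < j → (I j).VanishesFrom 0) ∧
    Mono ι ∧ PointwiseExact ι (d 0) ∧ ∀ j, PointwiseExact (d j) (d (j + 1))

theorem VanishesFrom.isZero (hM : M.VanishesFrom 0) : IsZero M :=
  Functor.isZero M fun S =>
    have := hM S (Nat.zero_le _)
    ModuleCat.isZero_of_subsingleton _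

theorem VanishesFrom.hasFiniteInjectiveResolution_of_zero (hM : M.VanishesFrom 0) :
    M.HasFiniteInjectiveResolution := by
  have subsingleton (S : FIObj) : Subsingleton (M.obj S) := hM S (Nat.zero_le _)
  refine ⟨0, fun _ => M, 𝟙 M, fun _ => 0, fun _ => (hM.fgBelow fun S => inferInstance).fg,
    fun _ => hM.isZero.injective, fun _ _ => hM, inferInstance, fun S => ?_, fun _ S => ?_⟩
  all_goals exact Subsingleton.elim _ _

theorem PointwiseExact.cokernel {I : FIMod} (a : M ⟶ I) : PointwiseExact a (cokernel.π a) :=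
  fun S => ((ShortComplex.moduleCat_exact_iff_range_eq_ker _).1
    ((ShortComplex.exact_cokernel a).map ((evaluation FIObj (ModuleCat ℂ)).obj S)))

variable {L N : FIMod} {f : L ⟶ M} {g : M ⟶ N}

theorem PointwiseExact.comp_mono (h : PointwiseExact f g) {N' : FIMod} (i : N ⟶ N') [Mono i] :
    PointwiseExact f (g ≫ i) := fun S => by
  have i_injective := (mono_iff i).1 ‹_› S
  rw [h S, NatTrans.comp_app, ModuleCat.hom_comp, LinearMap.ker_comp_of_ker_eq_bot]
  exact LinearMap.ker_eq_bot.2 i_injective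

theorem PointwiseExact.epi_comp (h : PointwiseExact f g) {L' : FIMod} (p : L' ⟶ L) [Epi p] :
    PointwiseExact (p ≫ f) g := fun S => by
  have p_surjective := (epi_iff p).1 ‹_› S
  rw [← h S, NatTrans.comp_app, ModuleCat.hom_comp, LinearMap.range_comp_of_range_eq_top]
  exact LinearMap.range_eq_top.2 p_surjective

theorem HasFiniteInjectiveResolution.of_cokernel {I : FIMod} [Injective I] (hI : I.FG) (a : M ⟶ I)
    [Mono a] (h : (cokernel a).HasFiniteInjectiveResolution) : M.HasFiniteInjectiveResolution := by
  obtain ⟨n, J, ι, d, fg, inj, vanish, _, exact_zero, exact_succ⟩ := h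
  refine ⟨n + 1, fun | 0 => I | j + 1 => J j, a, fun | 0 => cokernel.π a ≫ ι | j + 1 => d j,
    ?_, ?_, ?_, ‹_›, (PointwiseExact.cokernel a).comp_mono ι, ?_⟩
  · rintro (_ | j)
    exacts [hI, fg j]
  · rintro (_ | j)
    exacts [‹Injective I›, inj j]
  · rintro (_ | j) hj
    exacts [absurd hj (Nat.not_lt_zero _), vanish j (Nat.lt_of_succ_lt_succ hj)]
  · rintro (_ | j)
    exacts [exact_zero.epi_comp _, exact_succ j]

theorem HasFiniteInjectiveResolution.of_detecting {ι : Type} [Finite ι] {J : ι → FIMod} {D D' : ℕ}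
    [∀ i, Injective (J i)] [∀ i, IsSemisimpleRing (End (J i))] (hJ : ∀ i, (J i).FGBelow D')
    (hM : M.FGBelow D)
    (detects : ∀ (A : FIMod) (j : A ⟶ M) [Mono j],
      (∀ (i : ι) (φ : M ⟶ J i), j ≫ φ = 0) → j = 0)
    (step : ∀ R : FIMod, R.FGBelow D' →
      (∀ X : FIMod, (∀ i (φ : J i ⟶ X), φ = 0) → ∀ φ : R ⟶ X, φ = 0) →
      (∀ k, (∀ i ≠ k, ∀ φ : J i ⟶ J k, φ = 0) → ∀ φ : R ⟶ J k, φ = 0) →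
      R.HasFiniteInjectiveResolution) :
    M.HasFiniteInjectiveResolution := by
  have := fun i => hM.finite_end_hom (hJ i).finite
  have := fun i => Module.projective_of_isSemisimpleRing (End (J i)) (M ⟶ J i)
  have a (i : ι) : LeftApproximation M (J i) := nonempty_leftApproximation.some
  have injective (i : ι) : Injective (a i).obj := (a i).retract.injective
  have epi (i : ι) : Epi (a i).retract.r := inferInstance
  have fgBelow : (⨁ fun i => (a i).obj).FGBelow D' :=
    .biproduct fun i => (FGBelow.biproduct fun _ => hJ i).of_epi (a i).retract.r
  have := LeftApproximation.mono_sumHom a detects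
  exact .of_cokernel fgBelow.fg (LeftApproximation.sumHom a) (step _ (fgBelow.of_epi (cokernel.π _))
    (fun _ => LeftApproximation.cokernel_comp_eq_zero a)
    (LeftApproximation.cokernel_comp_eq_zero_of_ne a))

end FIMod

/-! ### Coprincipal and principal modules -/

theorem top_le_span_of_injective {k V W ι : Type*} [Semiring k] [AddCommMonoid V] [AddCommMonoid W]
    [Module k V] [Module k W] {f : V →ₗ[k] W} (hf : Function.Injective f) {v : ι → V}
    (h : ⊤ ≤ Submodule.span k (Set.range fun i => f (v i))) :
    ⊤ ≤ Submodule.span k (Set.range v) := by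
  rw [← Submodule.map_le_map_iff_of_injective hf, Submodule.map_span, ← Set.range_comp]
  exact le_top.trans h

namespace FIMod

open Opposite

variable {M : FIMod}

/-- The FI-module `S ↦ (X S → ℂ)` of functions on a presheaf `X`. -/
noncomputable def functionModule (X : FIObjᵒᵖ ⥤ Type) : FIMod where
  obj S := ModuleCat.of ℂ (X.obj (op S) → ℂ)
  map i := ModuleCat.ofHom (LinearMap.funLeft ℂ ℂ (X.map i.op))
  map_id S := by ext w x; exact congrArg w (X.map_id_apply _ x)
  map_comp i j := by ext w x; exact congrArg w (X.map_comp_apply j.op i.op x)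

section FunctionModule

variable {X : FIObjᵒᵖ ⥤ Type}

theorem functionModule_map_apply {S T : FIObj} (i : S ⟶ T) (w : (functionModule X).obj S)
    (x : X.obj (op T)) : (functionModule X).map i w x = w (X.map i.op x) := rfl

theorem functionModule_hom_map_apply (φ : M ⟶ functionModule X) {S T : FIObj} (i : S ⟶ T)
    (y : M.obj S) (x : X.obj (op T)) :
    φ.app T (M.map i y) x = φ.app S y (X.map i.op x) := by
  rw [NatTrans.naturality_apply, functionModule_map_apply]

theorem functionModule_hom_ext {φ ψ : M ⟶ functionModule X}
    (h : ∀ (S : FIObj) (y : M.obj S) (x : X.obj (op S)), φ.app S y x = ψ.app S y x) : φ = ψ := by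
  ext S y
  exact funext (h S y)

/-- A morphism to a function module, from its values at the points of `X`. -/
noncomputable def toFunctionModule (l : ∀ S, X.obj (op S) → M.obj S →ₗ[ℂ] ℂ)
    (hl : ∀ {S T : FIObj} (i : S ⟶ T) (x : X.obj (op T)) (y : M.obj S),
      l T x (M.map i y) = l S (X.map i.op x) y) : M ⟶ functionModule X where
  app S := ModuleCat.ofHom (LinearMap.pi (l S))
  naturality S T i := by ext y; exact funext fun x => hl i x y

/-- Pullback of functions along a morphism of presheaves. -/
noncomputable def functionModuleMap {X Y : FIObjᵒᵖ ⥤ Type} (η : X ⟶ Y) :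
    functionModule Y ⟶ functionModule X where
  app S := ModuleCat.ofHom (LinearMap.funLeft ℂ ℂ (η.app (op S)))
  naturality S T i := by
    ext w
    exact funext fun x => congrArg w (NatTrans.naturality_apply η i.op x).symm

end FunctionModule

/-- The injective FI-module `S ↦ ℂ^{Hom(S, K)}` representing the functor `M ↦ M(K)*`. -/
noncomputable def coprincipal : FIObjᵒᵖ ⥤ FIMod where
  obj K := functionModule (yoneda.obj K.unop)
  map f := functionModuleMap (yoneda.map f.unop)

section Coprincipal

variable {K S : FIObj}

theorem coprincipal_hom_apply (φ : M ⟶ coprincipal.obj (op K)) (y : M.obj S) (f : S ⟶ K) :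
    φ.app S y f = φ.app K (M.map f y) (𝟙 K) :=
  (congrArg _ (Category.comp_id f).symm).trans
    (functionModule_hom_map_apply (X := yoneda.obj K) φ f y (𝟙 K)).symm

theorem coprincipal_hom_ext {φ ψ : M ⟶ coprincipal.obj (op K)}
    (h : ∀ y : M.obj K, φ.app K y (𝟙 K) = ψ.app K y (𝟙 K)) : φ = ψ :=
  functionModule_hom_ext fun _ y f =>
    (coprincipal_hom_apply φ y f).trans ((h _).trans (coprincipal_hom_apply ψ y f).symm)

/-- The morphism to a coprincipal module that corresponds to a linear form on `M(K)`. -/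
noncomputable def toCoprincipal (l : Module.Dual ℂ (M.obj K)) : M ⟶ coprincipal.obj (op K) :=
  toFunctionModule (fun _ f => l ∘ₗ (M.map f).hom) fun i _ _ =>
    congrArg l (M.map_comp_apply i _ _).symm

theorem toCoprincipal_app_id (l : Module.Dual ℂ (M.obj K)) (y : M.obj K) :
    (toCoprincipal l).app K y (𝟙 K) = l y :=
  congrArg l (M.map_id_apply K y)

instance injective_coprincipal (K : FIObj) : Injective (coprincipal.obj (op K)) where
  factors {X Y} φ i _ := by
    let l : Module.Dual ℂ (X.obj K) := LinearMap.proj (𝟙 K) ∘ₗ (φ.app K).hom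
    have i_injective := (mono_iff i).1 ‹_› K
    obtain ⟨r, hr⟩ := (i.app K).hom.exists_leftInverse_of_injective
      (LinearMap.ker_eq_bot.2 i_injective)
    refine ⟨toCoprincipal (l ∘ₗ r), coprincipal_hom_ext fun x => ?_⟩
    exact (toCoprincipal_app_id (l ∘ₗ r) (i.app K x)).trans (congrArg l (LinearMap.congr_fun hr x))

theorem subsingleton_of_coprincipal (h : ∀ φ : M ⟶ coprincipal.obj (op K), φ = 0) :
    Subsingleton (M.obj K) := by
  refine subsingleton_of_forall_eq 0 fun y =>
    (Module.forall_dual_apply_eq_zero_iff ℂ y).1 fun l => ?_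
  rw [← toCoprincipal_app_id l y, h (toCoprincipal l)]
  rfl

theorem coprincipal_hom_eq_zero [Subsingleton (M.obj K)] (φ : M ⟶ coprincipal.obj (op K)) :
    φ = 0 :=
  coprincipal_hom_ext fun y => by rw [Subsingleton.elim y 0, map_zero, map_zero]

theorem vanishesFrom_coprincipal (K : FIObj) :
    (coprincipal.obj (op K)).VanishesFrom (Fintype.card K.α + 1) := fun S hS =>
  have : IsEmpty (S ⟶ K) := ⟨fun f => (FIObj.card_le_of_hom f).not_gt hS⟩
  inferInstanceAs (Subsingleton ((S ⟶ K) → ℂ))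

theorem fgBelow_coprincipal (K : FIObj) :
    (coprincipal.obj (op K)).FGBelow (Fintype.card K.α + 1) :=
  (vanishesFrom_coprincipal K).fgBelow fun S => inferInstanceAs (Module.Finite ℂ ((S ⟶ K) → ℂ))

instance isSemisimpleRing_end_coprincipal (K : FIObj) :
    IsSemisimpleRing (End (coprincipal.obj (op K))) := by
  classical
  have := Fintype.ofFinite (K ⟶ K)
  let evalId : End (coprincipal.obj (op K)) →ₗ[ℂ] Module.Dual ℂ ((K ⟶ K) → ℂ) :=
    { toFun φ := LinearMap.proj (𝟙 K) ∘ₗ (φ.app K).hom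
      map_add' _ _ := rfl
      map_smul' _ _ := rfl }
  have evalId_injective : Function.Injective evalId := fun _ _ h =>
    coprincipal_hom_ext (LinearMap.congr_fun h)
  have evalId_map (f : K ⟶ K) :
      evalId (coprincipal.map f.op) = (Pi.basisFun ℂ (K ⟶ K)).dualBasis f := by
    refine LinearMap.ext fun w => ?_
    rw [Module.Basis.dualBasis_apply, Pi.basisFun_repr]
    exact congrArg w (Category.id_comp f)
  refine FIObj.isSemisimpleRing_end (top_le_span_of_injective evalId_injective ?_)
  simp only [evalId_map]
  exact (Module.Basis.span_eq _).ge

end Coprincipal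

/-- The principal projective FI-module `S ↦ ℂ[Hom(K, S)]`. -/
noncomputable def principal : FIObjᵒᵖ ⥤ FIMod :=
  coyoneda ⋙ (Functor.whiskeringRight _ _ _).obj (ModuleCat.free ℂ)

section Principal

variable {K L S T : FIObj}

/-- The basis vector of `ℂ[Hom(K, S)]` indexed by `f`. -/
noncomputable def principalBasis (f : K ⟶ S) : (principal.obj (op K)).obj S := ModuleCat.freeMk f

theorem principal_map_basis (f : K ⟶ S) (i : S ⟶ T) :
    (principal.obj (op K)).map i (principalBasis f) = principalBasis (f ≫ i) :=
  ModuleCat.free_map_apply _ _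

theorem span_principalBasis :
    Submodule.span ℂ (Set.range (principalBasis (K := K) (S := S))) = ⊤ :=
  (Finsupp.basisSingleOne (R := ℂ) (ι := K ⟶ S)).span_eq

theorem principal_hom_ext {φ ψ : principal.obj (op K) ⟶ M}
    (h : φ.app K (principalBasis (𝟙 K)) = ψ.app K (principalBasis (𝟙 K))) : φ = ψ := by
  ext S : 2
  refine ModuleCat.free_hom_ext fun f => ?_
  have basis_eq : principalBasis f = (principal.obj (op K)).map f (principalBasis (𝟙 K)) := by
    rw [principal_map_basis, Category.id_comp]
  change φ.app S (principalBasis f) = ψ.app S (principalBasis f)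
  rw [basis_eq, NatTrans.naturality_apply, NatTrans.naturality_apply, h]

/-- The morphism from a principal module that corresponds to an element of `M(K)`. -/
noncomputable def ofPrincipal (m : M.obj K) : principal.obj (op K) ⟶ M where
  app S := ModuleCat.freeDesc (TypeCat.ofHom (fun f : K ⟶ S => M.map f m))
  naturality S T i := ModuleCat.free_hom_ext fun f => by
    simp [principal]

theorem ofPrincipal_app_basis (m : M.obj K) (f : K ⟶ S) :
    (ofPrincipal m).app S (principalBasis f) = M.map f m :=
  ModuleCat.freeDesc_apply _ _

theorem fgBelow_principal (K : FIObj) :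
    (principal.obj (op K)).FGBelow (Fintype.card K.α + 1) where
  finite S := inferInstanceAs (Module.Finite ℂ ((K ⟶ S) →₀ ℂ))
  eq_top N hN T := by
    rw [← top_le_iff, ← span_principalBasis, Submodule.span_le]
    rintro _ ⟨f, rfl⟩
    rw [← Category.id_comp f, ← principal_map_basis]
    refine N.map_mem _ _ ?_
    rw [N.eq_top_of_iso K.nonempty_ofFin_iso.some (hN _ (Nat.lt_succ_self _))]
    exact Submodule.mem_top

theorem FGBelow.principal_hom_eq_zero {D : ℕ} (hM : M.FGBelow D) (hD : D ≤ Fintype.card L.α)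
    (φ : M ⟶ principal.obj (op L)) : φ = 0 := by
  refine hM.hom_ext fun d hd => ?_
  have : IsEmpty (L ⟶ FIObj.ofFin d) := ⟨fun f => by
    have := FIObj.card_le_of_hom f
    rw [FIObj.card_ofFin] at this
    omega⟩
  have : Subsingleton ((principal.obj (op L)).obj (FIObj.ofFin d)) :=
    inferInstanceAs (Subsingleton ((L ⟶ FIObj.ofFin d) →₀ ℂ))
  exact ModuleCat.hom_ext (LinearMap.ext fun x => Subsingleton.elim _ _)

theorem principal_map_injective (L : FIObj) (i : S ⟶ T) :
    Function.Injective ((principal.obj (op L)).map i) :=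
  Finsupp.mapDomain_injective (FIObj.comp_right_injective L i)

theorem VanishesFrom.principal_hom_eq_zero {n : ℕ} (hM : M.VanishesFrom n)
    (φ : M ⟶ principal.obj (op L)) : φ = 0 := by
  ext S x
  obtain ⟨i⟩ : Nonempty (S ⟶ FIObj.ofFin (n + Fintype.card S.α)) :=
    FIObj.nonempty_hom_of_card_le (by rw [FIObj.card_ofFin]; omega)
  have := hM (FIObj.ofFin (n + Fintype.card S.α)) (by rw [FIObj.card_ofFin]; omega)
  refine principal_map_injective L i ?_
  change _ = (principal.obj (op L)).map i 0
  rw [← NatTrans.naturality_apply, Subsingleton.elim (M.map i x) 0, map_zero, map_zero]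

instance isSemisimpleRing_end_principal (K : FIObj) :
    IsSemisimpleRing (End (principal.obj (op K))) := by
  let atId : End (principal.obj (op K)) →ₗ[ℂ] (principal.obj (op K)).obj K :=
    { toFun φ := φ.app K (principalBasis (𝟙 K))
      map_add' _ _ := rfl
      map_smul' _ _ := rfl }
  have atId_injective : Function.Injective atId := fun _ _ => principal_hom_ext
  have atId_map (f : K ⟶ K) : atId (principal.map f.op) = principalBasis f :=
    (ModuleCat.free_map_apply _ _).trans (congrArg principalBasis (Category.comp_id f))
  refine FIObj.isSemisimpleRing_end (top_le_span_of_injective atId_injective ?_)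
  simp only [atId_map]
  exact span_principalBasis.ge

end Principal

end FIMod

/-! ### Functions on partial injections -/

theorem sum_neg_one_pow_card_mul_eq_zero {α R : Type*} [Fintype α] [DecidableEq α] [Ring R] (k : α)
    {F : Finset α → R} (hF : ∀ b, F (insert k b) = F b) :
    ∑ b : Finset α, (-1) ^ b.card * F b = 0 := by
  have not_mem : k ∉ Finset.univ.erase k := Finset.notMem_erase k _
  rw [← Finset.powerset_univ, ← Finset.insert_erase (Finset.mem_univ k),
    Finset.sum_powerset_insert not_mem, ← Finset.sum_add_distrib]
  refine Finset.sum_eq_zero fun b hb => ?_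
  have k_notMem : k ∉ b := fun hk => not_mem (Finset.mem_powerset.1 hb hk)
  rw [hF, Finset.card_insert_of_notMem k_notMem, pow_succ, mul_neg_one, neg_mul, add_neg_cancel]

namespace FIObj

variable {S T U K : FIObj}

/-- An injection, as a partial injection. -/
noncomputable def toPEquiv (i : S ⟶ T) : S.α ≃. T.α where
  toFun s := some (i.1 s)
  invFun := Function.partialInv i.1
  inv s t := (i.2.isPartialInv s t).trans Option.some_inj.symm

theorem mem_toPEquiv {i : S ⟶ T} {s : S.α} {t : T.α} : t ∈ toPEquiv i s ↔ i.1 s = t :=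
  Option.some_inj

theorem mem_toPEquiv_symm {i : S ⟶ T} {s : S.α} {t : T.α} :
    s ∈ (toPEquiv i).symm t ↔ i.1 s = t :=
  (toPEquiv i).mem_iff_mem.trans mem_toPEquiv

theorem toPEquiv_id : toPEquiv (𝟙 S) = PEquiv.refl S.α := PEquiv.ext fun _ => rfl

theorem toPEquiv_comp (i : S ⟶ T) (j : T ⟶ U) :
    toPEquiv (i ≫ j) = (toPEquiv i).trans (toPEquiv j) := PEquiv.ext fun _ => rfl

theorem toPEquiv_trans_symm (i : S ⟶ T) :
    (toPEquiv i).trans (toPEquiv i).symm = PEquiv.refl S.α :=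
  PEquiv.trans_symm_eq_iff_forall_isSome.2 fun _ => rfl

theorem toPEquiv_trans_comp_symm (g : K ⟶ S) (i : S ⟶ T) :
    (toPEquiv i).trans (toPEquiv (g ≫ i)).symm = (toPEquiv g).symm := by
  rw [toPEquiv_comp, PEquiv.symm_trans_rev, ← PEquiv.trans_assoc, toPEquiv_trans_symm,
    PEquiv.refl_trans]

theorem exists_eq_toPEquiv_symm {f : S.α ≃. K.α} (hf : ∀ k, ∃ s, k ∈ f s) :
    ∃ g : K ⟶ S, f = (toPEquiv g).symm := by
  choose g hg using hf
  refine ⟨⟨g, fun k k' h => Option.mem_unique (hg k) (h ▸ hg k')⟩, PEquiv.ext fun s => ?_⟩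
  ext k
  rw [← Option.mem_def, ← Option.mem_def, mem_toPEquiv_symm]
  exact ⟨f.inj (hg k), fun h => h ▸ hg k⟩

theorem exists_eq_trans_toPEquiv {f : S.α ≃. K.α} {k : K.α} (hf : ∀ s, k ∉ f s) :
    ∃ K' : FIObj, Fintype.card K'.α < Fintype.card K.α ∧
      ∃ (j : K' ⟶ K) (f' : S.α ≃. K'.α), f = f'.trans (toPEquiv j) := by
  classical
  let j : FIObj.of {k' // k' ≠ k} ⟶ K := ⟨Subtype.val, Subtype.val_injective⟩
  refine ⟨_, Fintype.card_subtype_lt (x := k) (by simp), j, f.trans (toPEquiv j).symm, ?_⟩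
  refine PEquiv.ext fun s => ?_
  ext k'
  rw [PEquiv.trans_assoc, PEquiv.trans_eq_some]
  refine ⟨fun h => ⟨k', h, (PEquiv.mem_trans _ _ _ _).2
    ⟨⟨k', ?_⟩, mem_toPEquiv_symm.2 rfl, rfl⟩⟩, ?_⟩
  · rintro rfl
    exact hf s h
  · rintro ⟨l, hl, hl'⟩
    obtain ⟨m, hm, hm'⟩ := (PEquiv.mem_trans _ _ _ _).1 hl'
    rwa [← mem_toPEquiv.1 hm', mem_toPEquiv_symm.1 hm]

end FIObj

namespace FIMod

open Opposite FIObj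

variable {M : FIMod} {K S T : FIObj}

/-- The presheaf of partial injections to `K`. -/
noncomputable def partialHoms (K : FIObj) : FIObjᵒᵖ ⥤ Type where
  obj S := S.unop.α ≃. K.α
  map i := TypeCat.ofHom fun f => (toPEquiv i.unop).trans f
  map_id S := by
    ext f : 3
    exact (congrArg (PEquiv.trans · f) toPEquiv_id).trans (PEquiv.refl_trans f)
  map_comp i j := by
    ext f : 3
    exact (congrArg (PEquiv.trans · f) (toPEquiv_comp j.unop i.unop)).trans
      (PEquiv.trans_assoc _ _ _)

/-- The FI-module `S ↦ ℂ^{PInj(S, K)}` of functions on partial injections. -/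
noncomputable def partialModule (K : FIObj) : FIMod := functionModule (partialHoms K)

theorem partialHoms_map (i : S ⟶ T) (f : T.α ≃. K.α) :
    (partialHoms K).map i.op f = (toPEquiv i).trans f := rfl

/-- The restriction of functions on partial injections along an injection of the targets. -/
noncomputable def partialModuleRestrict {K' : FIObj} (j : K' ⟶ K) :
    partialModule K ⟶ partialModule K' :=
  functionModuleMap
    { app S := TypeCat.ofHom fun f => f.trans (toPEquiv j)
      naturality S T i := by ext f : 3; exact PEquiv.trans_assoc _ _ _ }

open scoped Classical in
/-- The Möbius inversion coefficient of a function on partial injections at the inverse of the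
total injection `g`. -/
noncomputable def mobiusCoeff (g : K ⟶ S) : (partialModule K).obj S →ₗ[ℂ] ℂ :=
  ∑ b : Finset K.α, (-1 : ℂ) ^ b.card •
    (LinearMap.proj ((toPEquiv g).symm.trans (PEquiv.ofSet (bᶜ : Set K.α))) :
      ((S.α ≃. K.α) → ℂ) →ₗ[ℂ] ℂ)

open scoped Classical in
theorem mobiusCoeff_apply (g : K ⟶ S) (w : (partialModule K).obj S) :
    mobiusCoeff g w = ∑ b : Finset K.α,
      (-1 : ℂ) ^ b.card * w ((toPEquiv g).symm.trans (PEquiv.ofSet (bᶜ : Set K.α))) :=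
  LinearMap.sum_apply (M := (S.α ≃. K.α) → ℂ) _ _ w

theorem mobiusCoeff_comp_map (g : K ⟶ S) (i : S ⟶ T) (w : (partialModule K).obj S) :
    mobiusCoeff (g ≫ i) ((partialModule K).map i w) = mobiusCoeff g w := by
  rw [mobiusCoeff_apply, mobiusCoeff_apply]
  refine Finset.sum_congr rfl fun b _ => congrArg _ (congrArg w ?_)
  rw [partialHoms_map, ← PEquiv.trans_assoc, toPEquiv_trans_comp_symm]

theorem mobiusCoeff_map_eq_zero {h : K ⟶ T} {i : S ⟶ T} (hi : h ∉ Set.range fun g : K ⟶ S => g ≫ i)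
    (w : (partialModule K).obj S) : mobiusCoeff h ((partialModule K).map i w) = 0 := by
  classical
  obtain ⟨k, hk⟩ : ∃ k, ∀ s, i.1 s ≠ h.1 k := by
    by_contra! hs
    choose g hg using hs
    have g_injective : Function.Injective g := fun k k' e => h.2 (by rw [← hg, e, hg])
    exact hi ⟨⟨g, g_injective⟩, hom_ext hg⟩
  rw [mobiusCoeff_apply]
  refine sum_neg_one_pow_card_mul_eq_zero k fun b => congrArg w (PEquiv.ext fun s => ?_)
  ext k'
  simp only [partialHoms_map, ← Option.mem_def, PEquiv.mem_trans, mem_toPEquiv, mem_toPEquiv_symm,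
    PEquiv.mem_ofSet_iff]
  grind

/-- The retraction of a partial module onto the principal module. -/
noncomputable def mobius (K : FIObj) : partialModule K ⟶ principal.obj (op K) where
  app S := ModuleCat.ofHom
    ((Finsupp.linearEquivFunOnFinite ℂ ℂ (K ⟶ S)).symm.toLinearMap ∘ₗ LinearMap.pi mobiusCoeff)
  naturality S T i := by
    ext w
    refine Finsupp.ext fun h => ?_
    let v : (K ⟶ S) →₀ ℂ := Finsupp.equivFunOnFinite.symm fun g => mobiusCoeff g w
    by_cases hi : h ∈ Set.range fun g : K ⟶ S => g ≫ i
    · obtain ⟨g, rfl⟩ := hi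
      exact (mobiusCoeff_comp_map g i w).trans
        (Finsupp.mapDomain_apply (comp_right_injective K i) v g).symm
    · exact (mobiusCoeff_map_eq_zero hi w).trans (Finsupp.mapDomain_of_notMem_range v h hi).symm

theorem mobiusCoeff_eq_zero (h : ∀ φ : M ⟶ principal.obj (op K), φ = 0)
    (φ : M ⟶ partialModule K) (g : K ⟶ S) (y : M.obj S) : mobiusCoeff g (φ.app S y) = 0 :=
  congrArg (fun ψ : M ⟶ principal.obj (op K) => (show (K ⟶ S) →₀ ℂ from ψ.app S y) g)
    (h (φ ≫ mobius K))

open scoped Classical in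
/-- The indicator function of the identity of `K`. -/
noncomputable def partialUnit (K : FIObj) : (partialModule K).obj K :=
  fun f : K.α ≃. K.α => if f = PEquiv.refl K.α then 1 else 0

theorem mobiusCoeff_partialUnit (g : K ⟶ K) :
    mobiusCoeff g (partialUnit K) = Finsupp.single (𝟙 K) 1 g := by
  classical
  have eq_refl_iff (b : Finset K.α) :
      (toPEquiv g).symm.trans (PEquiv.ofSet (bᶜ : Set K.α)) = PEquiv.refl K.α ↔
        b = ∅ ∧ 𝟙 K = g := by
    refine ⟨fun h => ?_, ?_⟩
    · have fixed (k : K.α) : k ∉ b ∧ g.1 k = k := by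
        have k_mem : k ∈ PEquiv.refl K.α k := rfl
        obtain ⟨l, hl, hk⟩ := (PEquiv.mem_trans _ _ _ _).1 (h ▸ k_mem)
        obtain ⟨rfl, k_notMem⟩ := PEquiv.mem_ofSet_iff.1 hk
        exact ⟨k_notMem, mem_toPEquiv_symm.1 hl⟩
      exact ⟨Finset.eq_empty_of_forall_notMem fun k => (fixed k).1,
        hom_ext fun k => (fixed k).2.symm⟩
    · rintro ⟨rfl, rfl⟩
      simp [toPEquiv_id]
  rw [mobiusCoeff_apply]
  simp only [partialUnit, eq_refl_iff]
  rw [Fintype.sum_eq_single ∅ fun b hb => by rw [if_neg fun h => hb h.1, mul_zero]]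
  simp [Finsupp.single_apply]

/-- A principal module is a direct summand of a partial module. -/
noncomputable def principalRetract (K : FIObj) :
    Retract (principal.obj (op K)) (partialModule K) where
  i := ofPrincipal (partialUnit K)
  r := mobius K
  retract := by
    refine principal_hom_ext (Finsupp.ext fun g => ?_)
    have unit_eq : (ofPrincipal (partialUnit K)).app K (principalBasis (𝟙 K)) = partialUnit K :=
      (ofPrincipal_app_basis _ _).trans ((partialModule K).map_id_apply K _)
    exact (congrArg (mobiusCoeff g) unit_eq).trans (mobiusCoeff_partialUnit g)

theorem partialModule_hom_eq_zero (h : ∀ (L : FIObj) (φ : M ⟶ principal.obj (op L)), φ = 0)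
    (φ : M ⟶ partialModule K) : φ = 0 := by
  classical
  induction hn : Fintype.card K.α using Nat.strong_induction_on generalizing K with
  | _ n ih =>
  have apply_eq_zero_of_forall_notMem {S : FIObj} (y : M.obj S) (f : S.α ≃. K.α) (k : K.α)
      (hf : ∀ s, k ∉ f s) : φ.app S y f = 0 := by
    obtain ⟨K', card_lt, j, f', rfl⟩ := exists_eq_trans_toPEquiv hf
    exact congrArg (fun ψ : M ⟶ partialModule K' => ψ.app S y f')
      (ih _ (hn ▸ card_lt) (φ ≫ partialModuleRestrict j) rfl)
  refine functionModule_hom_ext fun S y (f : S.α ≃. K.α) => ?_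
  by_cases hf : ∀ k, ∃ s, k ∈ f s
  · obtain ⟨g, rfl⟩ := exists_eq_toPEquiv_symm hf
    have coeff_eq_zero := mobiusCoeff_eq_zero (h K) φ g y
    rw [mobiusCoeff_apply, Fintype.sum_eq_single ∅] at coeff_eq_zero
    · simpa using! coeff_eq_zero
    · intro b hb
      obtain ⟨k, hk⟩ := Finset.nonempty_iff_ne_empty.2 hb
      rw [apply_eq_zero_of_forall_notMem y _ k, mul_zero]
      intro s hs
      obtain ⟨_, -, hk'⟩ := (PEquiv.mem_trans _ _ _ _).1 hs
      exact (PEquiv.mem_ofSet_iff.1 hk').2 hk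
  · push Not at hf
    obtain ⟨k, hk⟩ := hf
    exact apply_eq_zero_of_forall_notMem y f k hk

end FIMod

/-! ### Injectivity of principal modules -/

section Average

variable {k G V W : Type*} [Field k] [Group G] [Fintype G] [Invertible (Fintype.card G : k)]
  [AddCommGroup V] [Module k V] [AddCommGroup W] [Module k W] {ρ : Representation k G V}
  {σ : Representation k G W}

theorem averageMap_apply_apply (ρ : Representation k G V) (g : G) (v : V) :
    ρ.averageMap (ρ g v) = ρ.averageMap v := by
  rw [Representation.averageMap, ← Representation.asAlgebraHom_single_one, ← Module.End.mul_apply,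
    ← map_mul, GroupAlgebra.mul_average_right]

theorem map_averageMap {f : V →ₗ[k] W} (hf : ∀ g v, f (ρ g v) = σ g (f v)) (v : V) :
    f (ρ.averageMap v) = σ.averageMap (f v) := by
  simp [Representation.averageMap, GroupAlgebra.average, hf]

theorem map_averageMap_of_invariant {f : V →ₗ[k] W} (hf : ∀ g v, f (ρ g v) = f v) (v : V) :
    f (ρ.averageMap v) = f v :=
  (map_averageMap (σ := 1) hf v).trans (Representation.averageMap_id _ _ fun _ => rfl)

end Average

theorem exists_linearMap_eq_of_eventually {k V : Type*} [Field k] [AddCommGroup V] [Module k V]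
    {X Y : ℕ → Type*} [∀ m, AddCommGroup (X m)] [∀ m, AddCommGroup (Y m)] [∀ m, Module k (X m)]
    [∀ m, Module k (Y m)] (i : ∀ m, X m →ₗ[k] Y m) (hi : ∀ᶠ m in .atTop, Function.Injective (i m))
    (l : ∀ m, X m →ₗ[k] V) :
    ∃ L : (∀ m, Y m) →ₗ[k] V, ∀ (x : ∀ m, X m) (y : ∀ m, Y m) (v : V),
      (∀ᶠ m in .atTop, i m (x m) = y m ∧ l m (x m) = v) → L y = v := by
  let Γ : Submodule k ((∀ m, Y m) × V) :=
    { carrier := {p | ∃ x : ∀ m, X m, ∀ᶠ m in .atTop, i m (x m) = p.1 m ∧ l m (x m) = p.2}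
      zero_mem' := ⟨0, .of_forall fun m => by simp⟩
      add_mem' := by
        rintro _ _ ⟨x, hx⟩ ⟨x', hx'⟩
        exact ⟨x + x', hx.mp (hx'.mono fun m h h' => by simp [h, h'])⟩
      smul_mem' := by
        rintro c _ ⟨x, hx⟩
        exact ⟨c • x, hx.mono fun m h => by simp [h]⟩ }
  have fst_injective : LinearMap.ker (LinearMap.fst k _ _ ∘ₗ Γ.subtype) = ⊥ := by
    rw [LinearMap.ker_eq_bot']
    rintro ⟨⟨y, v⟩, x, hx⟩ (rfl : y = 0)
    obtain ⟨m, ⟨hy, rfl⟩, hm⟩ := (hx.and hi).exists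
    have x_eq_zero : x m = 0 := hm (hy.trans (map_zero _).symm)
    simp [x_eq_zero]
  obtain ⟨r, hr⟩ := LinearMap.exists_leftInverse_of_injective _ fst_injective
  refine ⟨LinearMap.snd k _ _ ∘ₗ Γ.subtype ∘ₗ r, fun x y v h => ?_⟩
  exact congrArg (fun p : Γ => p.1.2) (LinearMap.congr_fun hr ⟨(y, v), x, h⟩)

namespace FIObj

variable {K S T : FIObj} {m : ℕ}

/-- The disjoint union of `K` and a set with `m` elements. -/
abbrev sumFin (K : FIObj) (m : ℕ) : FIObj := .of (K.α ⊕ Fin m)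

/-- The inclusion of `K` into its disjoint union with a set of `m` elements. -/
def inl (K : FIObj) (m : ℕ) : K ⟶ sumFin K m := ⟨Sum.inl, Sum.inl_injective⟩

/-- The injection of `K ⊔ Fin m` to itself given by a permutation of `Fin m`. -/
def sumPerm (K : FIObj) (σ : Equiv.Perm (Fin m)) : sumFin K m ⟶ sumFin K m :=
  (isoOfEquiv (S := sumFin K m) (T := sumFin K m) (Equiv.Perm.sumCongr 1 σ)).hom

/-- The partial injection to `K` that underlies an injection to `K ⊔ Fin m`. -/
noncomputable def leftPart (j : S ⟶ sumFin K m) : S.α ≃. K.α :=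
  (toPEquiv j).trans (toPEquiv (inl K m)).symm

theorem leftPart_comp (i : S ⟶ T) (j : T ⟶ sumFin K m) :
    leftPart (i ≫ j) = (toPEquiv i).trans (leftPart j) := by
  rw [leftPart, leftPart, toPEquiv_comp, PEquiv.trans_assoc]

theorem mem_leftPart {j : S ⟶ sumFin K m} {s : S.α} {k : K.α} :
    k ∈ leftPart j s ↔ j.1 s = Sum.inl k := by
  rw [leftPart, PEquiv.mem_trans]
  simp only [mem_toPEquiv, mem_toPEquiv_symm]
  exact ⟨fun ⟨_, h, h'⟩ => h.trans h'.symm, fun h => ⟨_, h, rfl⟩⟩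

theorem leftPart_eq_iff {j : S ⟶ sumFin K m} {f : S.α ≃. K.α} :
    leftPart j = f ↔ ∀ s k, j.1 s = Sum.inl k ↔ k ∈ f s := by
  simp only [← mem_leftPart]
  exact ⟨fun h _ _ => h ▸ Iff.rfl, fun h => PEquiv.ext fun s => Option.ext (h s)⟩

theorem leftPart_sumPerm (K : FIObj) (σ : Equiv.Perm (Fin m)) :
    leftPart (sumPerm K σ) = leftPart (𝟙 (sumFin K m)) := by
  refine leftPart_eq_iff.2 fun s k => ?_
  rw [mem_leftPart]
  rcases s with s | s
  · rfl
  · exact iff_of_false Sum.inr_ne_inl Sum.inr_ne_inl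

theorem exists_leftPart_eq (f : S.α ≃. K.α) (h : Fintype.card S.α ≤ m) :
    ∃ j : S ⟶ sumFin K m, leftPart j = f := by
  obtain ⟨e⟩ := Function.Embedding.nonempty_of_card_le (h.trans_eq (Fintype.card_fin m).symm)
  let j (s : S.α) : K.α ⊕ Fin m := (f s).elim (Sum.inr (e s)) Sum.inl
  have j_eq_inl (s : S.α) (k : K.α) : j s = Sum.inl k ↔ k ∈ f s := by
    cases hs : f s <;> simp [j, hs]
  have j_injective : Function.Injective j := by
    intro s s' hss
    rcases hs : f s with _ | k
    · have j_eq : j s = Sum.inr (e s) := by simp [j, hs]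
      rcases hs' : f s' with _ | k
      · have j_eq' : j s' = Sum.inr (e s') := by simp [j, hs']
        exact e.injective (Sum.inr_injective (j_eq ▸ j_eq' ▸ hss))
      · exact absurd (j_eq.symm.trans (hss.trans ((j_eq_inl s' k).2 hs'))) Sum.inr_ne_inl
    · exact f.inj hs ((j_eq_inl s' k).1 (hss.symm.trans ((j_eq_inl s k).2 hs)))
  exact ⟨⟨j, j_injective⟩, leftPart_eq_iff.2 j_eq_inl⟩

theorem exists_eq_inr {j : S ⟶ sumFin K m} {s : S.α} (hs : leftPart j s = none) :
    ∃ a, j.1 s = Sum.inr a := by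
  rcases h : j.1 s with k | a
  · rw [Option.eq_none_iff_forall_not_mem] at hs
    exact absurd (mem_leftPart.2 h) (hs k)
  · exact ⟨a, rfl⟩

theorem exists_comp_sumPerm_eq {j j' : S ⟶ sumFin K m} (h : leftPart j = leftPart j') :
    ∃ σ : Equiv.Perm (Fin m), j ≫ sumPerm K σ = j' := by
  choose a ha using fun s : {s // leftPart j s = none} => exists_eq_inr s.2
  choose a' ha' using fun s : {s // leftPart j s = none} =>
    exists_eq_inr (h ▸ s.2 : leftPart j' s = none)
  have injective_of_eq_inr {j : S ⟶ sumFin K m} {p : S.α → Prop} {a : {s // p s} → Fin m}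
      (ha : ∀ s, j.1 s.1 = Sum.inr (a s)) : Function.Injective a := fun s s' hss =>
    Subtype.ext (j.2 (by rw [ha, ha, hss]))
  obtain ⟨σ, hσ⟩ := Equiv.Perm.exists_extending_pair a a' (injective_of_eq_inr ha)
    (injective_of_eq_inr ha')
  refine ⟨σ, hom_ext fun s => ?_⟩
  change Sum.map id σ (j.1 s) = j'.1 s
  rcases hs : leftPart j s with _ | k
  · rw [ha ⟨s, hs⟩, ha' ⟨s, hs⟩, Sum.map_inr, hσ]
  · rw [mem_leftPart.1 hs, mem_leftPart.1 (h ▸ hs), Sum.map_inl, id]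

end FIObj

namespace FIMod

open Opposite FIObj

variable {M N : FIMod} {K S : FIObj} {m : ℕ}

/-- The action on `M(S)` of the permutations of `S`. -/
noncomputable def permRep (M : FIMod) (S : FIObj) :
    Representation ℂ (Equiv.Perm S.α) (M.obj S) where
  toFun σ := (M.map (isoOfEquiv σ).hom).hom
  map_one' := LinearMap.ext (M.map_id_apply S)
  map_mul' σ τ := LinearMap.ext (M.map_comp_apply (isoOfEquiv τ).hom (isoOfEquiv σ).hom)

/-- The action on `M(K ⊔ Fin m)` of the permutations of `Fin m`. -/
noncomputable def sumRep (M : FIMod) (K : FIObj) (m : ℕ) :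
    Representation ℂ (Equiv.Perm (Fin m)) (M.obj (sumFin K m)) :=
  (permRep M (sumFin K m)).comp
    ((Equiv.Perm.sumCongrHom K.α (Fin m)).comp (MonoidHom.inr _ _))

theorem sumRep_apply (σ : Equiv.Perm (Fin m)) (v : M.obj (sumFin K m)) :
    sumRep M K m σ v = M.map (sumPerm K σ) v := rfl

theorem app_averageMap_sumRep (φ : M ⟶ N) (v : M.obj (sumFin K m)) :
    φ.app _ ((sumRep M K m).averageMap v) = (sumRep N K m).averageMap (φ.app _ v) :=
  map_averageMap (f := (φ.app _).hom) (fun σ => NatTrans.naturality_apply φ (sumPerm K σ)) v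

theorem averageMap_map_eq {j j' : S ⟶ sumFin K m} (h : leftPart j = leftPart j') (y : M.obj S) :
    (sumRep M K m).averageMap (M.map j y) = (sumRep M K m).averageMap (M.map j' y) := by
  obtain ⟨σ, rfl⟩ := exists_comp_sumPerm_eq h
  rw [M.map_comp_apply, ← sumRep_apply, averageMap_apply_apply]

open scoped Classical in
/-- The sequence of the averages of the images of an element of `M(S)` under the injections
`S ⟶ K ⊔ Fin m` that extend the partial injection `f`. It is zero at the finitely many `m` for
which no such injection exists. -/
noncomputable def averageSeq (f : S.α ≃. K.α) : M.obj S →ₗ[ℂ] ∀ m, M.obj (sumFin K m) :=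
  LinearMap.pi fun m =>
    if h : ∃ j : S ⟶ sumFin K m, leftPart j = f
    then (sumRep M K m).averageMap ∘ₗ (M.map h.choose).hom else 0

theorem averageSeq_apply {j : S ⟶ sumFin K m} {f : S.α ≃. K.α} (hj : leftPart j = f)
    (y : M.obj S) : averageSeq f y m = (sumRep M K m).averageMap (M.map j y) := by
  have h : ∃ j : S ⟶ sumFin K m, leftPart j = f := ⟨j, hj⟩
  rw [averageSeq, LinearMap.pi_apply, dif_pos h]
  exact averageMap_map_eq (h.choose_spec.trans hj.symm) y

theorem eventually_exists_leftPart_eq (f : S.α ≃. K.α) :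
    ∀ᶠ m in .atTop, ∃ j : S ⟶ sumFin K m, leftPart j = f :=
  (Filter.eventually_ge_atTop (Fintype.card S.α)).mono fun _ => exists_leftPart_eq f

/-- A linear form on sequences of elements of the `M(K ⊔ Fin m)` that ignores finitely many terms
defines a morphism to the partial module of `K`. -/
noncomputable def toPartialModule (L : (∀ m, M.obj (sumFin K m)) →ₗ[ℂ] ℂ)
    (hL : ∀ y, (∀ᶠ m in .atTop, y m = 0) → L y = 0) : M ⟶ partialModule K :=
  toFunctionModule (X := partialHoms K) (fun S (f : S.α ≃. K.α) => L ∘ₗ averageSeq f)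
    fun {S T} i (f : T.α ≃. K.α) y => by
      refine sub_eq_zero.1 ((map_sub L _ _).symm.trans (hL _ ?_))
      filter_upwards [eventually_exists_leftPart_eq f] with m ⟨j, hj⟩
      have hij : leftPart (i ≫ j) = (partialHoms K).map i.op f := by
        rw [leftPart_comp, hj, partialHoms_map]
      rw [Pi.sub_apply, averageSeq_apply hj, averageSeq_apply hij, M.map_comp_apply, sub_self]

theorem partialModule_hom_apply (φ : M ⟶ partialModule K) (j : S ⟶ sumFin K m) (y : M.obj S) :
    φ.app _ (M.map j y) (leftPart (𝟙 (sumFin K m))) = φ.app S y (leftPart j) := by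
  rw [← Category.comp_id j, leftPart_comp, Category.comp_id]
  exact functionModule_hom_map_apply (X := partialHoms K) φ j y _

instance injective_partialModule (K : FIObj) : Injective (partialModule K) where
  factors {X Y} φ i _ := by
    let l (m : ℕ) : X.obj (sumFin K m) →ₗ[ℂ] ℂ :=
      LinearMap.proj (leftPart (𝟙 (sumFin K m))) ∘ₗ (φ.app _).hom
    have l_map {S : FIObj} {m : ℕ} (j : S ⟶ sumFin K m) (x : X.obj S) :
        l m (X.map j x) = φ.app S x (leftPart j) := partialModule_hom_apply φ j x
    have l_averageMap {m : ℕ} (x : X.obj (sumFin K m)) :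
        l m ((sumRep X K m).averageMap x) = l m x := by
      refine map_averageMap_of_invariant (fun σ x => ?_) x
      rw [sumRep_apply, l_map, leftPart_sumPerm]
      rfl
    have i_injective := (mono_iff i).1 ‹_›
    obtain ⟨L, hL⟩ := exists_linearMap_eq_of_eventually (fun m => (i.app (sumFin K m)).hom)
      (.of_forall fun m => i_injective _) l
    refine ⟨toPartialModule L fun y hy => hL 0 y 0 (hy.mono fun m hm => ?_),
      functionModule_hom_ext fun S x (f : S.α ≃. K.α) =>
        hL (averageSeq f x) _ _ ((eventually_exists_leftPart_eq f).mono fun m hm => ?_)⟩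
    · rw [hm]
      exact ⟨map_zero _, map_zero _⟩
    · obtain ⟨j, hj⟩ := hm
      rw [averageSeq_apply hj, l_averageMap, l_map, hj]
      refine ⟨(app_averageMap_sumRep i _).trans ?_, rfl⟩
      exact (congrArg _ (NatTrans.naturality_apply i j x)).trans (averageSeq_apply hj _).symm

instance injective_principal (K : FIObj) : Injective (principal.obj (op K)) :=
  (principalRetract K).injective

end FIMod

/-! ### Submodules killed by all morphisms to principal modules -/

theorem exists_equivariant_leftInverse {k G V W : Type*} [Field k] [Group G] [Fintype G]
    [Invertible (Fintype.card G : k)] [AddCommGroup V] [Module k V] [AddCommGroup W] [Module k W]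
    {ρ : Representation k G V} {σ : Representation k G W} {i : V →ₗ[k] W}
    (hi : ∀ g v, i (ρ g v) = σ g (i v)) (i_injective : Function.Injective i) :
    ∃ r : W →ₗ[k] V, (∀ g w, r (σ g w) = ρ g (r w)) ∧ r ∘ₗ i = LinearMap.id := by
  obtain ⟨r, hr⟩ := i.exists_leftInverse_of_injective (LinearMap.ker_eq_bot.2 i_injective)
  refine ⟨(σ.linHom ρ).averageMap r, fun g w => ?_, ?_⟩
  · have invariant := (σ.linHom ρ).averageMap_invariant r g
    have := LinearMap.congr_fun invariant (σ g w)
    simpa using this.symm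
  · have comp_equivariant (g : G) (f : W →ₗ[k] V) :
        LinearMap.lcomp k V i (σ.linHom ρ g f) = ρ.linHom ρ g (LinearMap.lcomp k V i f) := by
      ext v
      simp [hi]
    refine (map_averageMap comp_equivariant r).trans ?_
    change (ρ.linHom ρ).averageMap (r ∘ₗ i) = LinearMap.id
    rw [hr, Representation.averageMap_id]
    intro g
    ext v
    simp

theorem exists_forall_injective_of_surjective {k : Type*} [Field k] {V : ℕ → Type*}
    [∀ m, AddCommGroup (V m)] [∀ m, Module k (V m)] [∀ m, Module.Finite k (V m)] {D : ℕ}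
    {f : ∀ {m m' : ℕ}, m ≤ m' → V m →ₗ[k] V m'}
    (hf : ∀ {m m' : ℕ} (h : m ≤ m'), D ≤ m → Function.Surjective (f h)) :
    ∃ N, ∀ {m m' : ℕ} (h : m ≤ m'), N ≤ m → Function.Injective (f h) := by
  obtain ⟨N, hDN, hN⟩ := exists_minimalFor_of_wellFoundedLT (D ≤ ·)
    (fun m => Module.finrank k (V m)) ⟨D, le_rfl⟩
  have finrank_le {m m' : ℕ} (h : m ≤ m') (hm : D ≤ m) :
      Module.finrank k (V m') ≤ Module.finrank k (V m) :=
    LinearMap.finrank_le_finrank_of_surjective (hf h hm)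
  have finrank_eq (m : ℕ) (hm : N ≤ m) : Module.finrank k (V m) = Module.finrank k (V N) :=
    le_antisymm (finrank_le hm hDN) (hN (hDN.trans hm) (finrank_le hm hDN))
  refine ⟨N, fun h hm => ?_⟩
  rw [LinearMap.injective_iff_surjective_of_finrank_eq_finrank]
  · exact hf h (hDN.trans hm)
  · rw [finrank_eq _ hm, finrank_eq _ (hm.trans h)]

namespace FIObj

variable {K S : FIObj} {m m' : ℕ}

/-- The injection `K ⊔ Fin m ⟶ K ⊔ Fin m'` for `m ≤ m'`. -/
def sumCastLE (K : FIObj) (h : m ≤ m') : sumFin K m ⟶ sumFin K m' :=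
  ⟨Sum.map id (Fin.castLE h), Function.injective_id.sumMap (Fin.castLE_injective h)⟩

theorem leftPart_sumCastLE (K : FIObj) (h : m ≤ m') :
    leftPart (sumCastLE K h) = leftPart (𝟙 (sumFin K m)) := by
  refine leftPart_eq_iff.2 fun s k => ?_
  rw [mem_leftPart]
  rcases s with s | s
  · exact Sum.inl_injective.eq_iff.trans Sum.inl_injective.eq_iff.symm
  · exact iff_of_false Sum.inr_ne_inl Sum.inr_ne_inl

theorem leftPart_comp_sumCastLE (j : S ⟶ sumFin K m) (h : m ≤ m') :
    leftPart (j ≫ sumCastLE K h) = leftPart j := by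
  rw [leftPart_comp, leftPart_sumCastLE, ← leftPart_comp, Category.comp_id]

end FIObj

namespace FIMod

open FIObj

variable {M T : FIMod} {K : FIObj} {m m' D : ℕ}

theorem exists_averageMap_sumCastLE_eq_zero {v : M.obj (sumFin K m)}
    (hv : ∀ φ : M ⟶ partialModule K, φ.app _ v (leftPart (𝟙 (sumFin K m))) = 0) :
    ∃ (m' : ℕ) (h : m ≤ m'), (sumRep M K m').averageMap (M.map (sumCastLE K h) v) = 0 := by
  by_contra! ne_zero
  let y := averageSeq (leftPart (𝟙 (sumFin K m))) v
  have y_ne_zero (m' : ℕ) (h : m ≤ m') : y m' ≠ 0 :=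
    (averageSeq_apply (leftPart_sumCastLE K h) v).trans_ne (ne_zero m' h)
  obtain ⟨L, hL⟩ := exists_linearMap_eq_of_eventually
    (fun m' => LinearMap.toSpanSingleton ℂ (M.obj (sumFin K m')) (y m'))
    ((Filter.eventually_ge_atTop m).mono fun m' h => smul_left_injective ℂ (y_ne_zero m' h))
    fun _ => LinearMap.id
  have L_y : L y = 1 := hL 1 y 1 (.of_forall fun m' => ⟨one_smul ℂ _, rfl⟩)
  have L_eq_zero (z : ∀ m', M.obj (sumFin K m')) (hz : ∀ᶠ m' in .atTop, z m' = 0) : L z = 0 :=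
    hL 0 z 0 (hz.mono fun m' h => ⟨(zero_smul ℂ _).trans h.symm, rfl⟩)
  exact one_ne_zero (L_y.symm.trans (hv (toPartialModule L L_eq_zero)))

/-- The map on `Perm (Fin m)`-invariants that pushes forward to `K ⊔ Fin m'` and averages. -/
noncomputable def invariantsTransition (M : FIMod) (K : FIObj) (h : m ≤ m') :
    (sumRep M K m).invariants →ₗ[ℂ] (sumRep M K m').invariants :=
  ((sumRep M K m').averageMap ∘ₗ (M.map (sumCastLE K h)).hom).codRestrict _
    (fun _ => Representation.averageMap_invariant _ _) ∘ₗ (sumRep M K m).invariants.subtype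

theorem averageMap_map_averageMap (h : m ≤ m') (v : M.obj (sumFin K m)) :
    (sumRep M K m').averageMap (M.map (sumCastLE K h) ((sumRep M K m).averageMap v)) =
      (sumRep M K m').averageMap (M.map (sumCastLE K h) v) := by
  refine map_averageMap_of_invariant
    (f := (sumRep M K m').averageMap ∘ₗ (M.map (sumCastLE K h)).hom) (fun σ v => ?_) v
  change (sumRep M K m').averageMap (M.map _ (M.map (sumPerm K σ) v)) = _
  rw [← M.map_comp_apply]
  refine averageMap_map_eq ?_ v
  rw [leftPart_comp_sumCastLE, leftPart_sumPerm, leftPart_sumCastLE]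

namespace FGBelow

theorem invariantsTransition_surjective (hM : M.FGBelow D) (h : m ≤ m') (hD : D ≤ m) :
    Function.Surjective (invariantsTransition M K h) := by
  let R := (LinearMap.range (invariantsTransition M K h)).map (Submodule.subtype _)
  have average_mem_R : R.mkQ ∘ₗ (sumRep M K m').averageMap = 0 := by
    refine hM.linearMap_ext fun d hd g x => (Submodule.Quotient.mk_eq_zero R).2 ?_
    obtain ⟨g', hg'⟩ := exists_leftPart_eq (m := m) (leftPart g)
      (by rw [card_ofFin]; exact (hd.trans_le hD).le)
    have leftPart_eq : leftPart (g' ≫ sumCastLE K h) = leftPart g :=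
      (leftPart_comp_sumCastLE g' h).trans hg'
    rw [← averageMap_map_eq leftPart_eq, M.map_comp_apply, ← averageMap_map_averageMap h]
    exact ⟨_, ⟨⟨_, (sumRep M K m).averageMap_invariant _⟩, rfl⟩, rfl⟩
  rintro ⟨w, hw⟩
  have w_mem : w ∈ R := by
    rw [← (sumRep M K m').averageMap_id w hw]
    exact (Submodule.Quotient.mk_eq_zero R).1 (LinearMap.congr_fun average_mem_R w)
  obtain ⟨_, ⟨v, rfl⟩, rfl⟩ := w_mem
  exact ⟨v, rfl⟩

theorem exists_forall_invariant_eq_zero (hM : M.FGBelow D) (K : FIObj) :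
    ∃ N, ∀ m ≥ N, ∀ v ∈ (sumRep M K m).invariants,
      (∀ φ : M ⟶ partialModule K, φ.app _ v (leftPart (𝟙 (sumFin K m))) = 0) → v = 0 := by
  have := hM.finite
  obtain ⟨N, hN⟩ := exists_forall_injective_of_surjective (f := fun h => invariantsTransition M K h)
    fun h hm => hM.invariantsTransition_surjective h hm
  refine ⟨N, fun m hm v v_invariant hv => ?_⟩
  obtain ⟨m', h, average_eq_zero⟩ := exists_averageMap_sumCastLE_eq_zero hv
  exact congrArg Subtype.val (hN h hm
    (a₁ := ⟨v, v_invariant⟩) (a₂ := 0) ((Subtype.ext average_eq_zero).trans (map_zero _).symm))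

theorem subsingleton_of_invariant_eq_zero (hM : M.FGBelow D) (i : T ⟶ M) [Mono i]
    (hT : ∀ t ∈ (sumRep T (ofFin D) m).invariants, t = 0) :
    Subsingleton (T.obj (sumFin (ofFin D) m)) := by
  classical
  obtain ⟨r, r_equivariant, r_comp⟩ := exists_equivariant_leftInverse
    (ρ := permRep T (sumFin (ofFin D) m)) (σ := permRep M (sumFin (ofFin D) m))
    (i := (i.app _).hom) (fun _ => NatTrans.naturality_apply i _) ((mono_iff i).1 ‹_› _)
  have r_map_inl (y : M.obj (ofFin D)) : r (M.map (inl (ofFin D) m) y) = 0 := by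
    refine hT _ fun σ => (r_equivariant _ _).symm.trans (congrArg r ?_)
    exact (M.map_comp_apply _ _ _).symm
  have r_eq_zero : r = 0 := hM.linearMap_ext fun d hd g x => by
    obtain ⟨g'⟩ : Nonempty (ofFin d ⟶ ofFin D) :=
      nonempty_hom_of_card_le (by rw [card_ofFin, card_ofFin]; exact hd.le)
    obtain ⟨τ, hτ⟩ := Equiv.Perm.exists_extending_pair (g' ≫ inl _ m).1 g.1
      (g' ≫ inl _ m).2 g.2
    have g_eq : g = (g' ≫ inl _ m) ≫ (isoOfEquiv τ).hom :=
      FIObj.hom_ext fun a => (hτ a).symm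
    rw [g_eq, M.map_comp_apply, M.map_comp_apply]
    exact (r_equivariant τ _).trans ((congrArg _ (r_map_inl _)).trans (map_zero _))
  refine subsingleton_of_forall_eq 0 fun t => ?_
  rw [← LinearMap.id_apply (R := ℂ) t, ← r_comp, r_eq_zero]
  rfl

theorem exists_vanishesFrom (hM : M.FGBelow D) :
    ∃ N, ∀ (T : FIMod) (i : T ⟶ M) [Mono i],
      (∀ φ : M ⟶ partialModule (ofFin D), i ≫ φ = 0) → T.VanishesFrom N := by
  obtain ⟨N, hN⟩ := hM.exists_forall_invariant_eq_zero (ofFin D)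
  refine ⟨D + N, fun T i _ hi S hS => ?_⟩
  obtain ⟨n, hn⟩ := Nat.exists_eq_add_of_le hS
  have card_eq : Fintype.card (sumFin (ofFin D) (N + n)).α = Fintype.card S.α := by
    rw [hn]
    refine Fintype.card_sum.trans ?_
    rw [card_ofFin, Fintype.card_fin, add_assoc]
  have := hM.subsingleton_of_invariant_eq_zero (m := N + n) i fun t t_invariant => by
    refine (mono_iff i).1 ‹_› _ ((hN _ (Nat.le_add_right N n) _ (fun σ => ?_) fun φ => ?_).trans
      (map_zero _).symm)
    · rw [sumRep_apply, ← NatTrans.naturality_apply, ← sumRep_apply, t_invariant]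
    · exact congrArg (fun ψ : T ⟶ partialModule (ofFin D) => ψ.app _ t (leftPart (𝟙 _))) (hi φ)
  exact (T.map_bijective_of_isIso
    (isoOfEquiv (Fintype.equivOfCardEq card_eq)).hom).2.subsingleton

end FGBelow

end FIMod

/-! ### Existence of resolutions -/

namespace FIMod

open FIObj Opposite

variable {M A : FIMod} {D N d : ℕ}

theorem hom_eq_zero_of_mono {J : FIMod} [Injective J] (j : A ⟶ M) [Mono j]
    (h : ∀ φ : M ⟶ J, j ≫ φ = 0) (ψ : A ⟶ J) : ψ = 0 := by
  rw [← Injective.comp_factorThru ψ j, h]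

theorem VanishesFrom.of_coprincipal {n : ℕ}
    (h : ∀ k ≥ n, ∀ φ : M ⟶ coprincipal.obj (op (ofFin k)), φ = 0) : M.VanishesFrom n := fun S hS =>
  have := subsingleton_of_coprincipal (h _ hS)
  (M.map_bijective_of_isIso S.nonempty_ofFin_iso.some.hom).2.subsingleton

theorem VanishesFrom.coprincipal_hom_eq_zero {k : ℕ} (hM : M.VanishesFrom N) (hk : N ≤ k)
    (φ : M ⟶ coprincipal.obj (op (ofFin k))) : φ = 0 :=
  have := hM (ofFin k) (hk.trans_eq (card_ofFin k).symm)
  FIMod.coprincipal_hom_eq_zero φ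

theorem coprincipal_hom_coprincipal_eq_zero {k l : ℕ} (hkl : k < l)
    (φ : coprincipal.obj (op (ofFin k)) ⟶ coprincipal.obj (op (ofFin l))) : φ = 0 :=
  (vanishesFrom_coprincipal (ofFin k)).coprincipal_hom_eq_zero
    (by rw [card_ofFin]; exact hkl) φ

theorem principal_hom_principal_eq_zero {k l : ℕ} (hkl : k < l)
    (φ : principal.obj (op (ofFin k)) ⟶ principal.obj (op (ofFin l))) : φ = 0 :=
  (fgBelow_principal (ofFin k)).principal_hom_eq_zero
    (by rw [card_ofFin, card_ofFin]; exact hkl) φ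

theorem VanishesFrom.eq_zero_of_coprincipal (hA : A.VanishesFrom N) (j : A ⟶ M) [Mono j]
    (h : ∀ k < N, ∀ φ : M ⟶ coprincipal.obj (op (ofFin k)), j ≫ φ = 0) : j = 0 := by
  have hA' : A.VanishesFrom 0 := .of_coprincipal fun k _ φ => by
    rcases lt_or_ge k N with hk | hk
    · exact hom_eq_zero_of_mono j (h k hk) φ
    · exact hA.coprincipal_hom_eq_zero hk φ
  exact hA'.isZero.eq_of_src _ _

theorem VanishesFrom.hasFiniteInjectiveResolution (hM : M.VanishesFrom N)
    (finite : ∀ S, Module.Finite ℂ (M.obj S)) : M.HasFiniteInjectiveResolution := by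
  induction N generalizing M with
  | zero => exact hM.hasFiniteInjectiveResolution_of_zero
  | succ N ih =>
    refine .of_detecting (J := fun k : Fin (N + 1) => coprincipal.obj (op (ofFin k))) (D' := N + 1)
      (fun k => (fgBelow_coprincipal _).mono (by rw [card_ofFin]; exact k.2)) (hM.fgBelow finite)
      (fun A j _ hj => ?_) fun R hR hom_eq_zero hom_eq_zero_of_ne => ih ?_ hR.finite
    · have hA : A.VanishesFrom (N + 1) := fun S hS =>
        have := hM S hS
        ((mono_iff j).1 ‹_› S).subsingleton
      exact hA.eq_zero_of_coprincipal j fun k hk => hj ⟨k, hk⟩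
    · refine .of_coprincipal fun k hk => ?_
      rcases hk.eq_or_lt with rfl | hk
      · exact hom_eq_zero_of_ne (Fin.last N) fun i hi =>
          coprincipal_hom_coprincipal_eq_zero (Fin.val_lt_last hi)
      · exact hom_eq_zero _ fun i => coprincipal_hom_coprincipal_eq_zero (i.2.trans_le hk)

theorem partialModule_hom_eq_zero_of_ofFin {K : FIObj}
    (h : ∀ l, ∀ φ : M ⟶ principal.obj (op (ofFin l)), φ = 0) (φ : M ⟶ partialModule K) : φ = 0 :=
  partialModule_hom_eq_zero (fun L ψ => by
    have e := principal.mapIso L.nonempty_ofFin_iso.some.op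
    rw [← cancel_mono e.hom, h _ (ψ ≫ e.hom), zero_comp]) φ

/-- The coprincipal modules on sets with fewer than `N` elements together with the principal modules
on sets with fewer than `d` elements. -/
noncomputable def standardInjective (N d : ℕ) : Fin N ⊕ Fin d → FIMod :=
  Sum.elim (fun k => coprincipal.obj (op (ofFin k))) (fun k => principal.obj (op (ofFin k)))

instance injective_standardInjective : ∀ i, Injective (standardInjective N d i) :=
  Sum.rec (fun _ => injective_coprincipal _) fun _ => injective_principal _

instance isSemisimpleRing_end_standardInjective :
    ∀ i, IsSemisimpleRing (End (standardInjective N d i)) :=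
  Sum.rec (fun _ => isSemisimpleRing_end_coprincipal _) fun _ => isSemisimpleRing_end_principal _

theorem fgBelow_standardInjective : ∀ i, (standardInjective N d i).FGBelow (N + d)
  | .inl k => (fgBelow_coprincipal _).mono (by rw [card_ofFin]; omega)
  | .inr k => (fgBelow_principal _).mono (by rw [card_ofFin]; omega)

theorem standardInjective_hom_principal_eq_zero {l : ℕ} :
    ∀ {i : Fin N ⊕ Fin d}, (∀ k : Fin d, i = .inr k → k < l) →
      ∀ φ : standardInjective N d i ⟶ principal.obj (op (ofFin l)), φ = 0
  | .inl _, _ => (vanishesFrom_coprincipal _).principal_hom_eq_zero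
  | .inr k, hk => principal_hom_principal_eq_zero (hk k rfl)

theorem FGBelow.hasFiniteInjectiveResolution_of_principal (hM : M.FGBelow D)
    (h : ∀ l ≥ d, ∀ φ : M ⟶ principal.obj (op (ofFin l)), φ = 0) :
    M.HasFiniteInjectiveResolution := by
  induction d generalizing M D with
  | zero =>
    obtain ⟨N, hN⟩ := hM.exists_vanishesFrom
    refine (hN M (𝟙 M) fun φ => ?_).hasFiniteInjectiveResolution hM.finite
    rw [Category.id_comp, partialModule_hom_eq_zero_of_ofFin (fun l => h l l.zero_le) φ]
  | succ d ih =>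
    obtain ⟨N, hN⟩ := hM.exists_vanishesFrom
    refine .of_detecting (fgBelow_standardInjective (N := N) (d := d + 1)) hM
      (fun A j _ hj => ?_) fun R hR hom_eq_zero hom_eq_zero_of_ne => ih hR fun l hl => ?_
    · have principal_eq_zero (l : ℕ) (φ : M ⟶ principal.obj (op (ofFin l))) : j ≫ φ = 0 := by
        rcases lt_or_ge l (d + 1) with hl | hl
        · exact hj (.inr ⟨l, hl⟩) φ
        · rw [h l hl φ, comp_zero]
      have hA : A.VanishesFrom N := hN A j fun φ => partialModule_hom_eq_zero_of_ofFin
        (fun l => hom_eq_zero_of_mono j (principal_eq_zero l)) _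
      exact hA.eq_zero_of_coprincipal j fun k hk => hj (.inl ⟨k, hk⟩)
    · rcases hl.eq_or_lt with rfl | hl
      · exact hom_eq_zero_of_ne (.inr (Fin.last d)) fun i hi =>
          standardInjective_hom_principal_eq_zero fun k hk =>
            Fin.val_lt_last fun h => hi (hk.trans (congrArg _ h))
      · exact hom_eq_zero _ fun i => standardInjective_hom_principal_eq_zero fun k _ =>
          k.2.trans_le hl

theorem FG.hasFiniteInjectiveResolution (hM : M.FG) : M.HasFiniteInjectiveResolution := by
  obtain ⟨D, hD⟩ := hM.exists_fgBelow
  exact hD.hasFiniteInjectiveResolution_of_principal fun l hl =>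
    hD.principal_hom_eq_zero (hl.trans_eq (card_ofFin l).symm)

end FIMod

/-- Every finitely generated FI-module admits a finite resolution
`0 → M → I^0 → ⋯ → I^n → 0` by finitely generated modules that are injective in the
category of finitely generated FI-modules (the modules beyond position n vanish). -/
theorem fg_FIMod_finite_injective_resolution (M : FIMod) (hM : FIMod.FG M) :
    ∃ (n : ℕ) (I : ℕ → FIMod) (ι : M ⟶ I 0) (d : ∀ j, I j ⟶ I (j + 1)),
      (∀ j, FIMod.FG (I j)) ∧
      (∀ j, InjectiveInFG (I j)) ∧
      (∀ j, n < j → ∀ (S : FIObj) (x : (I j).obj S), x = 0) ∧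
      (∀ S : FIObj, Function.Injective (ι.app S)) ∧
      (∀ S : FIObj, LinearMap.range (ι.app S).hom = LinearMap.ker ((d 0).app S).hom) ∧
      (∀ (j : ℕ) (S : FIObj),
        LinearMap.range ((d j).app S).hom = LinearMap.ker ((d (j + 1)).app S).hom) := by
  obtain ⟨n, I, ι, d, fg, injective, vanishes, mono, exact_zero, exact_succ⟩ :=
    FIMod.FG.hasFiniteInjectiveResolution hM
  refine ⟨n, I, ι, d, fg, fun j => FIMod.injectiveInFG (I j), fun j hj S x => ?_,
    (FIMod.mono_iff ι).1 mono, exact_zero, exact_succ⟩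
  have := vanishes j hj S (Nat.zero_le _)
  exact Subsingleton.elim x 0
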